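/- Let F : 𝔹 → X be starlike on 𝔹. Fix z ∈ 𝔹 \ {0}, set z₀ = z/‖z‖, and fix l ∈ T_z (so that also l ∈ T_{z₀}). Then the function h : 𝕌 → ℂ defined by h(ζ) = ζ / l([DF(ζ z₀)]⁻¹ F(ζ z₀)) for ζ ≠ 0 and h(0) = 1 is holomorphic on the unit disk 𝕌 and satisfies Re h(ζ) > 0 for all ζ ∈ 𝕌; that is, h belongs to the Carathéodory class 𝒫. -/

import Mathlib

/-!
Along the complex line through `z₀`, put `g ζ = l (q (ζ • z₀))`. The inverse operator depends
holomorphically on an invertible operator, so `q` is holomorphic on the ball and `g` on the disk.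
Differentiating `F (ζ • z₀) = DF(ζ • z₀) (q (ζ • z₀))` at `0`, where `q 0 = 0`, gives
`g' 0 = l z₀ = 1`. The divided difference `k = dslope g 0` is therefore holomorphic, with
`k 0 = 1` and `k ζ = g ζ / ζ` elsewhere, so `h = 1 / k`. For `ζ ≠ 0` the rotated functional
`(‖ζ‖ / ζ) l` supports the ball at `ζ • z₀`, and starlikeness applied to it says exactly that
`‖ζ‖ * k ζ` has positive real part.
-/

/-- A normalized locally biholomorphic map `F` on the open unit ball `𝔹` of a
complex Banach space `X` is *starlike* if `F 0 = 0`, `DF(0) = I`, `F` is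
holomorphic on `𝔹`, `DF(z)` is boundedly invertible for every `z ∈ 𝔹` (with
inverse `T`), and `Re (l ([DF(z)]⁻¹ F(z))) > 0` for every `z ∈ 𝔹 \ {0}` and
every `l ∈ T_z` (i.e. `l z = ‖z‖`, `‖l‖ = 1`). -/
def IsStarlikeOnBall {X : Type*} [NormedAddCommGroup X] [NormedSpace ℂ X]
    (F : X → X) : Prop :=
  F 0 = 0 ∧ fderiv ℂ F 0 = ContinuousLinearMap.id ℂ X ∧
  AnalyticOnNhd ℂ F (Metric.ball 0 1) ∧
  ∀ z ∈ Metric.ball (0 : X) 1,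
    ∃ T : X →L[ℂ] X,
      T.comp (fderiv ℂ F z) = ContinuousLinearMap.id ℂ X ∧
      (fderiv ℂ F z).comp T = ContinuousLinearMap.id ℂ X ∧
      (z ≠ 0 → ∀ l : X →L[ℂ] ℂ, l z = ‖z‖ → ‖l‖ = 1 → 0 < (l (T (F z))).re)

/-- If `DF(w)` is boundedly invertible on the ball, the solution `q` of `DF(w) (q w) = F w`
inherits differentiability from `F`. -/
lemma differentiableAt_of_fderiv_apply_eq
    {X : Type*} [NormedAddCommGroup X] [NormedSpace ℂ X] [CompleteSpace X]
    (F : X → X) (hstar : IsStarlikeOnBall F)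
    (q : X → X) (hq : ∀ w ∈ Metric.ball (0 : X) 1, fderiv ℂ F w (q w) = F w)
    (w : X) (hw : w ∈ Metric.ball (0 : X) 1) : DifferentiableAt ℂ q w := by
  obtain ⟨-, -, hF, hT⟩ := hstar
  have key : ∀ v ∈ Metric.ball (0 : X) 1, ∃ e : X ≃L[ℂ] X,
      (e : X →L[ℂ] X) = fderiv ℂ F v := by
    intro v hv
    obtain ⟨T, h1, h2, -⟩ := hT v hv
    exact ⟨ContinuousLinearEquiv.equivOfInverse (fderiv ℂ F v) T
      (fun x => by simpa using DFunLike.congr_fun h1 x)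
      (fun x => by simpa using DFunLike.congr_fun h2 x), by ext; rfl⟩
  have heq : q =ᶠ[nhds w] fun v => ContinuousLinearMap.inverse (fderiv ℂ F v) (F v) := by
    filter_upwards [Metric.isOpen_ball.mem_nhds hw] with v hv
    obtain ⟨e, he⟩ := key v hv
    rw [← hq v hv, ← he, ContinuousLinearMap.inverse_equiv]
    simp
  refine DifferentiableAt.congr_of_eventuallyEq ?_ heq
  obtain ⟨e, he⟩ := key w hw
  have hinv : DifferentiableAt ℂ
      (ContinuousLinearMap.inverse : (X →L[ℂ] X) → (X →L[ℂ] X)) (fderiv ℂ F w) := by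
    rw [← he]
    exact (contDiffAt_map_inverse (n := 1) e).differentiableAt (by norm_num)
  exact (hinv.comp w (hF w hw).fderiv.differentiableAt).clm_apply (hF w hw).differentiableAt


/-- **Starlike mappings induce Carathéodory-class functions on the disk.**
Let `F` be starlike on `𝔹`, let `q w = [DF(w)]⁻¹ F(w)` (characterized by
`DF(w)(q w) = F w`), fix `z ∈ 𝔹 \ {0}`, set `z₀ = z / ‖z‖`, and fix
`l ∈ T_z`. Then `h : 𝕌 → ℂ` defined by `h ζ = ζ / l (q (ζ • z₀))` for
`ζ ≠ 0` and `h 0 = 1` is holomorphic on the unit disk and satisfies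
`Re (h ζ) > 0` for all `ζ ∈ 𝕌`; i.e. `h` belongs to the Carathéodory class. -/
theorem caratheodory_function_from_starlike
    {X : Type*} [NormedAddCommGroup X] [NormedSpace ℂ X] [CompleteSpace X]
    (F : X → X) (hstar : IsStarlikeOnBall F)
    (q : X → X) (hq : ∀ w ∈ Metric.ball (0 : X) 1, fderiv ℂ F w (q w) = F w)
    (z : X) (hz : z ∈ Metric.ball (0 : X) 1) (hz0 : z ≠ 0)
    (l : X →L[ℂ] ℂ) (hlz : l z = ‖z‖) (hl : ‖l‖ = 1)
    (z₀ : X) (hz₀ : z₀ = ‖z‖⁻¹ • z)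
    (h : ℂ → ℂ)
    (hh : ∀ ζ : ℂ, h ζ = if ζ = 0 then 1 else ζ / l (q (ζ • z₀))) :
    DifferentiableOn ℂ h (Metric.ball 0 1) ∧
    (∀ ζ ∈ Metric.ball (0 : ℂ) 1, 0 < (h ζ).re) := by
  have hqd := differentiableAt_of_fderiv_apply_eq F hstar q hq
  obtain ⟨hF0, hD0, hF, hT⟩ := hstar
  have hzn : ‖z‖ ≠ 0 := norm_ne_zero_iff.mpr hz0
  have hz₀n : ‖z₀‖ = 1 := by
    rw [hz₀, norm_smul, norm_inv, norm_norm, inv_mul_cancel₀ hzn]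
  have hlz₀ : l z₀ = 1 := by
    rw [hz₀, ← Complex.coe_smul, map_smul, hlz, smul_eq_mul, Complex.ofReal_inv]
    exact inv_mul_cancel₀ (by exact_mod_cast hzn)
  have hmem : ∀ ζ ∈ Metric.ball (0 : ℂ) 1, ζ • z₀ ∈ Metric.ball (0 : X) 1 := by
    intro ζ hζ
    simpa [norm_smul, hz₀n] using hζ
  have h0 : (0 : ℂ) ∈ Metric.ball (0 : ℂ) 1 := by simp
  have hline : ∀ ζ : ℂ, HasDerivAt (fun ζ : ℂ => ζ • z₀) z₀ ζ := fun ζ => by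
    simpa using (hasDerivAt_id ζ).smul_const z₀
  have hud : ∀ ζ ∈ Metric.ball (0 : ℂ) 1, DifferentiableAt ℂ (fun ζ : ℂ => q (ζ • z₀)) ζ :=
    fun ζ hζ => (hqd _ (hmem ζ hζ)).comp ζ (hline ζ).differentiableAt
  have hq0 : q 0 = 0 := by
    have := hq 0 (by simp)
    rw [hD0, hF0] at this
    simpa using this
  have hu0 : HasDerivAt (fun ζ : ℂ => q (ζ • z₀)) z₀ 0 := by
    have hcd : DifferentiableAt ℂ (fun ζ : ℂ => fderiv ℂ F (ζ • z₀)) 0 :=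
      (hF _ (hmem 0 h0)).fderiv.differentiableAt.comp (0 : ℂ) (hline 0).differentiableAt
    have h1 := hcd.hasDerivAt.clm_apply (hud 0 h0).hasDerivAt
    have h2 : HasDerivAt (fun ζ : ℂ => F (ζ • z₀)) z₀ 0 := by
      have := (hF _ (hmem 0 h0)).differentiableAt.hasFDerivAt.comp_hasDerivAt (0 : ℂ) (hline 0)
      simpa [hD0, Function.comp_def] using this
    -- `h1` and `h2` compute the derivative at `0` of one and the same function.
    have h3 : (fun ζ : ℂ => fderiv ℂ F (ζ • z₀) (q (ζ • z₀))) =ᶠ[nhds 0]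
        fun ζ => F (ζ • z₀) := by
      filter_upwards [Metric.isOpen_ball.mem_nhds h0] with ζ hζ using hq _ (hmem ζ hζ)
    have h4 := h1.unique (h2.congr_of_eventuallyEq h3)
    simp only [zero_smul, hq0, hD0, map_zero, zero_add, ContinuousLinearMap.id_apply] at h4
    have h5 := (hud 0 h0).hasDerivAt
    rwa [h4] at h5
  set g : ℂ → ℂ := fun ζ => l (q (ζ • z₀)) with hg
  have hgd : DifferentiableOn ℂ g (Metric.ball 0 1) := fun ζ hζ =>
    (l.differentiableAt.comp ζ (hud ζ hζ)).differentiableWithinAt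
  have hg0 : HasDerivAt g 1 0 := by
    have := l.hasFDerivAt.comp_hasDerivAt (0 : ℂ) hu0
    rwa [hlz₀] at this
  have hkd : DifferentiableOn ℂ (dslope g 0) (Metric.ball 0 1) :=
    (Complex.differentiableOn_dslope (Metric.isOpen_ball.mem_nhds h0)).mpr hgd
  have hk : ∀ ζ : ℂ, ζ ≠ 0 → dslope g 0 ζ = ζ⁻¹ * g ζ := by
    intro ζ hζ
    rw [dslope_of_ne _ hζ, slope_def_module]
    simp [hg, hq0]
  have hkpos : ∀ ζ ∈ Metric.ball (0 : ℂ) 1, 0 < (dslope g 0 ζ).re := by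
    intro ζ hζ
    by_cases hζ0 : ζ = 0
    · simp [hζ0, hg0.deriv]
    have hζn : ‖ζ‖ ≠ 0 := norm_ne_zero_iff.mpr hζ0
    obtain ⟨T, hT1, -, hTpos⟩ := hT _ (hmem ζ hζ)
    have hTq : T (F (ζ • z₀)) = q (ζ • z₀) := by
      rw [← hq _ (hmem ζ hζ)]
      exact DFunLike.congr_fun hT1 (q (ζ • z₀))
    have hz₀0 : z₀ ≠ 0 := norm_ne_zero_iff.mp (by simp [hz₀n])
    -- `(‖ζ‖ / ζ) l` is a norm-one functional attaining its norm at `ζ • z₀`.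
    have hpos := hTpos (smul_ne_zero hζ0 hz₀0) (((‖ζ‖ : ℂ) * ζ⁻¹) • l)
      (by simp [hlz₀, norm_smul, hz₀n]; field_simp)
      (by simp [norm_smul, hl, hζn])
    rw [hTq, smul_apply, smul_eq_mul, mul_assoc, Complex.re_ofReal_mul] at hpos
    rw [hk ζ hζ0]
    exact pos_of_mul_pos_right hpos (norm_nonneg ζ)
  have hne : ∀ ζ ∈ Metric.ball (0 : ℂ) 1, dslope g 0 ζ ≠ 0 := fun ζ hζ h0 => by
    have := hkpos ζ hζ
    simp [h0] at this
  have hheq : ∀ ζ : ℂ, h ζ = (dslope g 0 ζ)⁻¹ := by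
    intro ζ
    rw [hh]
    split_ifs with hζ
    · simp [hζ, hg0.deriv]
    · rw [hk ζ hζ, mul_inv, inv_inv, div_eq_mul_inv]
  refine ⟨(hkd.inv hne).congr fun ζ _ => hheq ζ, fun ζ hζ => ?_⟩
  rw [hheq, Complex.inv_re]
  exact div_pos (hkpos ζ hζ) (Complex.normSq_pos.mpr (hne ζ hζ))
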